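/- Let L be an order polynomially complete lattice, n ≥ 1, and let κ be a cardinal of uncountable cofinality. If κ < νₙ(L), then κ < μ_∞(L). In particular, ν_∞(L) ≤ μ_∞(L)⁺, and if μ_∞(L) has uncountable cofinality then ν_∞(L) ≤ μ_∞(L). -/

import Mathlib

universe u v w

open Cardinal

/-- A well-ordered chain: a chain whose induced strict order is well-founded. -/
def IsWellChain {L : Type u} [PartialOrder L] (A : Set L) : Prop :=
  IsChain (· ≤ ·) A ∧ A.WellFoundedOn (· < ·)

/-- A co-well-ordered chain: a chain well-ordered under the reverse order. -/
def IsCoWellChain {L : Type u} [PartialOrder L] (A : Set L) : Prop :=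
  IsChain (· ≤ ·) A ∧ A.WellFoundedOn (· > ·)

/-- A subset of a partial order is uniform if it is an antichain, a well-ordered chain,
or a co-well-ordered chain. -/
def IsUniform {L : Type u} [PartialOrder L] (A : Set L) : Prop :=
  IsAntichain (· ≤ ·) A ∨ IsWellChain A ∨ IsCoWellChain A

/-- `mu L` is the least cardinal `m` such that `L` has no uniform subset of cardinality `m`. -/
noncomputable def mu (L : Type u) [PartialOrder L] : Cardinal.{u} :=
  sInf {m : Cardinal.{u} | ¬ ∃ A : Set L, IsUniform A ∧ #A = m}

/-- `nu2 L₁ L₂` is the least cardinal `n` such that there is no family of `n` pairwise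
incomparable monotone functions from `L₁` to `L₂` (functions ordered pointwise). -/
noncomputable def nu2 (L₁ : Type u) (L₂ : Type v) [PartialOrder L₁] [PartialOrder L₂] :
    Cardinal.{max u v} :=
  sInf {n : Cardinal.{max u v} |
    ¬ ∃ S : Set (L₁ → L₂), (∀ f ∈ S, Monotone f) ∧ IsAntichain (· ≤ ·) S ∧ #S = n}

/-- `nu L = nu2 L L`. -/
noncomputable def nu (L : Type u) [PartialOrder L] : Cardinal.{u} := nu2 L L

/-- `muInf L = sup_{n} mu (Lⁿ)` for `n ≥ 1`. -/
noncomputable def muInf (L : Type u) [PartialOrder L] : Cardinal.{u} :=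
  ⨆ n : ℕ, mu (Fin (n + 1) → L)

/-- `nuInf L = sup_{n} nu (Lⁿ, L)` for `n ≥ 1`. -/
noncomputable def nuInf (L : Type u) [PartialOrder L] : Cardinal.{u} :=
  ⨆ n : ℕ, nu2 (Fin (n + 1) → L) L

/-- A function `(Fin n → L) → L` is a polynomial function if it lies in the smallest
sublattice of the function lattice containing all coordinate projections and all
constant functions. -/
def IsPolynomialFn (L : Type u) [Lattice L] (n : ℕ) (f : (Fin n → L) → L) : Prop :=
  f ∈ latticeClosure ({g : (Fin n → L) → L | ∃ i : Fin n, g = fun x => x i} ∪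
    {g : (Fin n → L) → L | ∃ c : L, g = fun _ => c})

/-- A lattice is order polynomially complete if for every `n ≥ 1` every monotone
`n`-ary function is a polynomial function. -/
def OPC (L : Type u) [Lattice L] : Prop :=
  ∀ n : ℕ, 1 ≤ n → ∀ f : (Fin n → L) → L, Monotone f → IsPolynomialFn L n f

/-- The three possible comparison types between distinct blocks of a canonical family. -/
inductive CompType : Type
  | lt
  | gt
  | incomp

/-- The relation on `L` associated to a comparison type. -/
def CompType.rel {L : Type u} [PartialOrder L] : CompType → L → L → Prop
  | .lt, a, b => a < b
  | .gt, a, b => b < a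
  | .incomp, a, b => ¬ a ≤ b ∧ ¬ b ≤ a

/-- A family of subsets of `L` is canonical if each member is uniform, all members are
of the same type, and comparison between elements of distinct members depends only on
the pair of indices. -/
def IsCanonical {L : Type u} [PartialOrder L] {ι : Type v} (A : ι → Set L) : Prop :=
  ((∀ i, IsAntichain (· ≤ ·) (A i)) ∨ (∀ i, IsWellChain (A i)) ∨ (∀ i, IsCoWellChain (A i))) ∧
  ∃ F : ι → ι → CompType, ∀ i j, i ≠ j → ∀ a ∈ A i, ∀ b ∈ A j, (F i j).rel a b

/-! An `n`-ary polynomial function arises from one of countably many lattice terms by plugging in a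
finite tuple of constants, and a term is monotone in its constants. So if `κ` has uncountable
cofinality, then among `κ` pairwise incomparable polynomial functions there are `κ` that come from
a single term, and the tuples of constants they use are pairwise incomparable in a finite power of
`L`. For the bound by `μ_∞(L)⁺`, the antichains of unit vectors in the powers of a nontrivial `L`
make `μ_∞(L)` infinite, hence its successor regular and uncountable. -/

open scoped SetFamily

lemma countable_latticeClosure {α : Type*} [Lattice α] {s : Set α} (hs : s.Countable) :
    (latticeClosure s).Countable := by
  let T : ℕ → Set α := fun n => (fun t => t ∪ (t ⊻ t ∪ t ⊼ t))^[n] s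
  have T_succ (n : ℕ) : T (n + 1) = T n ∪ (T n ⊻ T n ∪ T n ⊼ T n) :=
    Function.iterate_succ_apply' _ n s
  have T_countable (n : ℕ) : (T n).Countable := by
    induction n with
    | zero => exact hs
    | succ n ih =>
      rw [T_succ]
      exact ih.union ((ih.image2 ih _).union (ih.image2 ih _))
  have T_mono : Monotone T := monotone_nat_of_le_succ fun n => T_succ n ▸ Set.subset_union_left
  have exists_common {a b : α} (ha : a ∈ ⋃ n, T n) (hb : b ∈ ⋃ n, T n) :
      ∃ n, a ∈ T n ∧ b ∈ T n := by
    obtain ⟨m, hm⟩ := Set.mem_iUnion.1 ha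
    obtain ⟨n, hn⟩ := Set.mem_iUnion.1 hb
    exact ⟨max m n, T_mono (le_max_left m n) hm, T_mono (le_max_right m n) hn⟩
  refine (Set.countable_iUnion T_countable).mono
    (latticeClosure_min (Set.subset_iUnion T 0) ⟨fun a ha b hb => ?_, fun a ha b hb => ?_⟩)
  · obtain ⟨n, han, hbn⟩ := exists_common ha hb
    exact Set.mem_iUnion.2 ⟨n + 1, T_succ n ▸ .inr (.inl (Set.mem_image2_of_mem han hbn))⟩
  · obtain ⟨n, han, hbn⟩ := exists_common ha hb
    exact Set.mem_iUnion.2 ⟨n + 1, T_succ n ▸ .inr (.inr (Set.mem_image2_of_mem han hbn))⟩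

lemma exists_finite_mem_latticeClosure_union_image {α ι : Type*} [Lattice α] {s : Set α}
    {G : ι → α} {a : α} (ha : a ∈ latticeClosure (s ∪ Set.range G)) :
    ∃ C : Set ι, C.Finite ∧ a ∈ latticeClosure (s ∪ G '' C) := by
  have closure_mono {C D : Set ι} (hCD : C ⊆ D) :
      latticeClosure (s ∪ G '' C) ⊆ latticeClosure (s ∪ G '' D) :=
    latticeClosure_mono (Set.union_subset_union_right s (Set.image_mono hCD))
  induction ha using latticeClosure_sup_inf_induction with
  | mem a ha =>
    obtain ha | ⟨i, rfl⟩ := ha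
    · exact ⟨∅, Set.finite_empty, subset_latticeClosure (.inl ha)⟩
    · exact ⟨{i}, Set.finite_singleton i, subset_latticeClosure (.inr ⟨i, rfl, rfl⟩)⟩
  | sup a _ b _ iha ihb =>
    obtain ⟨C, hC, haC⟩ := iha
    obtain ⟨D, hD, hbD⟩ := ihb
    exact ⟨C ∪ D, hC.union hD, isSublattice_latticeClosure.supClosed
      (closure_mono Set.subset_union_left haC) (closure_mono Set.subset_union_right hbD)⟩
  | inf a _ b _ iha ihb =>
    obtain ⟨C, hC, haC⟩ := iha
    obtain ⟨D, hD, hbD⟩ := ihb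
    exact ⟨C ∪ D, hC.union hD, isSublattice_latticeClosure.infClosed
      (closure_mono Set.subset_union_left haC) (closure_mono Set.subset_union_right hbD)⟩

/-- The term functions of the lattice `L` in variables indexed by `α`: the sublattice of
`(α → L) → L` generated by the coordinate projections. Unlike polynomial functions, they involve
no constants, so there are only countably many of them when `α` is countable. -/
def latticeTermFn (α : Type v) (L : Type u) [Lattice L] : Set ((α → L) → L) :=
  latticeClosure (Set.range fun i x => x i)

section TermFn

variable {α : Type v} {β : Type w} {L : Type u} [Lattice L]

lemma countable_latticeTermFn [Countable α] : (latticeTermFn α L).Countable :=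
  countable_latticeClosure (Set.countable_range _)

lemma monotone_of_mem_latticeTermFn {g : (α → L) → L} (hg : g ∈ latticeTermFn α L) :
    Monotone g := by
  have isSublattice_monotone : IsSublattice {f : (α → L) → L | Monotone f} :=
    ⟨fun _ hf _ hg => hf.sup hg, fun _ hf _ hg => hf.inf hg⟩
  refine latticeClosure_min ?_ isSublattice_monotone hg
  rintro _ ⟨i, rfl⟩
  exact Function.monotone_eval i

lemma image_sumElim_latticeTermFn (c : β → L) :
    (fun (g : (α ⊕ β → L) → L) (x : α → L) => g (Sum.elim x c)) '' latticeTermFn (α ⊕ β) L =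
      latticeClosure ((Set.range fun i x => x i) ∪ Set.range (Function.const (α → L) ∘ c)) := by
  rw [latticeTermFn, image_latticeClosure _ _ (fun _ _ => rfl) fun _ _ => rfl, ← Set.range_comp,
    ← Set.Sum.elim_range]
  congr 2
  ext (i | i) <;> rfl

end TermFn

lemma IsPolynomialFn.exists_latticeTermFn {L : Type u} [Lattice L] {n : ℕ}
    {f : (Fin n → L) → L} (hf : IsPolynomialFn L n f) :
    ∃ m, ∃ c : Fin m → L, ∃ g ∈ latticeTermFn (Fin n ⊕ Fin m) L,
      (fun x => g (Sum.elim x c)) = f := by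
  have generators_eq : {g : (Fin n → L) → L | ∃ i : Fin n, g = fun x => x i} ∪
      {g | ∃ c : L, g = fun _ => c} =
        (Set.range fun i x => x i) ∪ Set.range (Function.const (Fin n → L)) := by
    ext g
    exact or_congr (exists_congr fun _ => eq_comm) (exists_congr fun _ => eq_comm)
  rw [IsPolynomialFn, generators_eq] at hf
  obtain ⟨C, hC, hfC⟩ := exists_finite_mem_latticeClosure_union_image hf
  obtain ⟨m, c, -, rfl⟩ := hC.fin_param
  refine ⟨m, c, ?_⟩
  rwa [← Set.range_comp, ← image_sumElim_latticeTermFn] at hfC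

lemma exists_le_mk_inter_of_subset_iUnion {α ι : Type u} [Countable ι] {s : Set α}
    {t : ι → Set α} (hst : s ⊆ ⋃ i, t i) {κ : Cardinal.{u}} (hκ : ℵ₀ < κ.ord.cof)
    (hκs : κ ≤ #s) : ∃ i, κ ≤ #(s ∩ t i : Set α) := by
  choose index mem_index using fun a : s => Set.mem_iUnion.1 (hst a.2)
  obtain ⟨i, r, hrs, hκr, hri⟩ := infinite_pigeonhole_set index κ hκs
    (hκ.le.trans (Ordinal.cof_ord_le κ)) (mk_le_aleph0.trans_lt hκ)
  refine ⟨i, hκr.trans (mk_le_mk_of_subset fun a ha => ⟨hrs ha, ?_⟩)⟩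
  exact hri ha ▸ mem_index ⟨a, hrs ha⟩

lemma exists_isAntichain_bijOn_of_subset_range {α : Type u} {β : Type v} [Preorder α]
    [Preorder β] {F : α → β} (hF : Monotone F) {S : Set β} (hS : IsAntichain (· ≤ ·) S)
    (hSF : S ⊆ Set.range F) : ∃ A : Set α, IsAntichain (· ≤ ·) A ∧ Set.BijOn F A S := by
  obtain ⟨A, -, hA⟩ := Set.SurjOn.exists_bijOn_subset (Set.image_univ (f := F) ▸ hSF)
  refine ⟨A, fun a ha b hb hne hle => hne (hA.injOn ha hb ?_), hA⟩
  exact hS.eq (hA.mapsTo ha) (hA.mapsTo hb) (hF hle)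

lemma IsUniform.subset {L : Type u} [PartialOrder L] {A B : Set L} (hA : IsUniform A)
    (hBA : B ⊆ A) : IsUniform B :=
  hA.imp (·.subset hBA) (Or.imp (fun h => ⟨h.1.mono hBA, h.2.subset hBA⟩)
    fun h => ⟨h.1.mono hBA, h.2.subset hBA⟩)

lemma IsUniform.mk_lt_mu {L : Type u} [PartialOrder L] {A : Set L} (hA : IsUniform A) :
    #A < mu L := by
  have exists_not_mk : {m | ¬ ∃ B : Set L, IsUniform B ∧ #B = m}.Nonempty :=
    ⟨Order.succ #L, fun ⟨B, _, hB⟩ => (hB ▸ mk_set_le B).not_gt (Order.lt_succ _)⟩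
  by_contra! hle
  obtain ⟨B, hBA, hB⟩ := le_mk_iff_exists_subset.1 hle
  exact csInf_mem exists_not_mk ⟨B, hA.subset hBA, hB⟩

lemma exists_isAntichain_of_lt_nu2 {L₁ : Type u} {L₂ : Type v} [PartialOrder L₁]
    [PartialOrder L₂] {κ : Cardinal.{max u v}} (hκ : κ < nu2 L₁ L₂) :
    ∃ S : Set (L₁ → L₂), (∀ f ∈ S, Monotone f) ∧ IsAntichain (· ≤ ·) S ∧ #S = κ :=
  not_not.1 (notMem_of_lt_csInf' hκ)

lemma nu2_le_two_of_subsingleton {L₁ : Type u} {L₂ : Type v} [PartialOrder L₁] [PartialOrder L₂]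
    [Subsingleton L₂] : nu2 L₁ L₂ ≤ 2 := by
  by_contra! hlt
  obtain ⟨S, -, -, hS⟩ := exists_isAntichain_of_lt_nu2 hlt
  exact (hS ▸ le_one_iff_subsingleton.2 inferInstance : (2 : Cardinal) ≤ 1).not_gt one_lt_two

section MuInf

variable {L : Type u} [PartialOrder L]

lemma mu_pi_succ_le_muInf (n : ℕ) : mu (Fin (n + 1) → L) ≤ muInf L :=
  le_ciSup (f := fun n : ℕ => mu (Fin (n + 1) → L)) bddAbove_of_small n

lemma muInf_pos : 0 < muInf L :=
  zero_le.trans_lt <|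
    (IsUniform.mk_lt_mu (.inl IsAntichain.empty)).trans_le (mu_pi_succ_le_muInf 0)

lemma mk_lt_muInf_of_isAntichain_pi {m : ℕ} {A : Set (Fin m → L)} (hA : IsAntichain (· ≤ ·) A)
    (hA_one : 1 < #A) : #A < muInf L := by
  cases m with
  | zero => exact absurd (le_one_iff_subsingleton.2 inferInstance) hA_one.not_ge
  | succ m => exact (IsUniform.mk_lt_mu (.inl hA)).trans_le (mu_pi_succ_le_muInf m)

lemma natCast_lt_mu_pi [Nontrivial L] (n : ℕ) : (n : Cardinal) < mu (Fin n → L) := by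
  obtain ⟨a, b, hab⟩ : ∃ a b : L, ¬ b ≤ a := by
    by_contra! hle
    obtain ⟨a, b, hne⟩ := exists_pair_ne L
    exact hne ((hle b a).antisymm (hle a b))
  let e (i : Fin n) : Fin n → L := Function.update (fun _ => a) i b
  have eq_of_le {i j : Fin n} (hle : e i ≤ e j) : i = j := by
    by_contra hne
    exact hab (by simpa [e, hne] using hle i)
  have e_injective : Function.Injective e := fun i j h => eq_of_le h.le
  have e_antichain : IsAntichain (· ≤ ·) (Set.range e) := by
    rintro _ ⟨i, rfl⟩ _ ⟨j, rfl⟩ hne hle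
    exact hne (congrArg e (eq_of_le hle))
  have mk_range_e : #(Set.range e) = n := by
    simpa using mk_range_eq_of_injective e_injective
  exact mk_range_e ▸ IsUniform.mk_lt_mu (.inl e_antichain)

lemma aleph0_le_muInf [Nontrivial L] : ℵ₀ ≤ muInf L := by
  refine aleph0_le.2 fun n => ?_
  calc (n : Cardinal) ≤ (n + 1 : ℕ) := by exact_mod_cast n.le_succ
    _ ≤ mu (Fin (n + 1) → L) := (natCast_lt_mu_pi (n + 1)).le
    _ ≤ muInf L := mu_pi_succ_le_muInf n

end MuInf

section Polynomial

variable {L : Type u} [Lattice L] {n : ℕ} {κ : Cardinal.{u}}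

lemma lt_muInf_of_isAntichain_polynomialFn {S : Set ((Fin n → L) → L)}
    (hS : IsAntichain (· ≤ ·) S) (hpoly : ∀ f ∈ S, IsPolynomialFn L n f)
    (hκ : ℵ₀ < κ.ord.cof) (hκS : κ ≤ #S) : κ < muInf L := by
  let plug (t : Σ m, latticeTermFn (Fin n ⊕ Fin m) L) (c : Fin t.1 → L) : (Fin n → L) → L :=
    fun x => t.2.1 (Sum.elim x c)
  have plug_mono (t) : Monotone (plug t) := fun c d hcd x =>
    monotone_of_mem_latticeTermFn t.2.2 (Sum.elim_le_elim_iff.2 ⟨le_rfl, hcd⟩)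
  have subset_iUnion_range : S ⊆ ⋃ t, Set.range (plug t) := fun f hf => by
    obtain ⟨m, c, g, hg, rfl⟩ := (hpoly f hf).exists_latticeTermFn
    exact Set.mem_iUnion.2 ⟨⟨m, g, hg⟩, c, rfl⟩
  have (m : ℕ) : Countable (latticeTermFn (Fin n ⊕ Fin m) L) := countable_latticeTermFn.to_subtype
  obtain ⟨t, ht⟩ := exists_le_mk_inter_of_subset_iUnion subset_iUnion_range hκ hκS
  obtain ⟨A, hA, hAS⟩ := exists_isAntichain_bijOn_of_subset_range (plug_mono t)
    (hS.subset Set.inter_subset_left) Set.inter_subset_right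
  have hκA : κ ≤ #A := ht.trans_eq (mk_congr (hAS.equiv _)).symm
  have one_lt_κ : 1 < κ := one_lt_aleph0.trans (hκ.trans_le (Ordinal.cof_ord_le κ))
  exact hκA.trans_lt (mk_lt_muInf_of_isAntichain_pi hA (one_lt_κ.trans_le hκA))

variable (hL : ∀ f : (Fin n → L) → L, Monotone f → IsPolynomialFn L n f)
include hL

lemma lt_muInf_of_lt_nu2 (hκ : ℵ₀ < κ.ord.cof) (hlt : κ < nu2 (Fin n → L) L) : κ < muInf L := by
  obtain ⟨S, hmono, hS, rfl⟩ := exists_isAntichain_of_lt_nu2 hlt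
  exact lt_muInf_of_isAntichain_polynomialFn hS (fun f hf => hL f (hmono f hf)) hκ le_rfl

lemma nu2_le_succ_muInf : nu2 (Fin n → L) L ≤ Order.succ (muInf L) := by
  rcases subsingleton_or_nontrivial L with _ | _
  · calc nu2 (Fin n → L) L ≤ 2 := nu2_le_two_of_subsingleton
      _ = Order.succ 1 := by simpa [one_add_one_eq_two] using (succ_natCast 1).symm
      _ ≤ Order.succ (muInf L) := Order.succ_le_succ (Cardinal.one_le_iff_pos.2 muInf_pos)
  · have hcof : ℵ₀ < (Order.succ (muInf L)).ord.cof := by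
      rw [(isRegular_succ aleph0_le_muInf).cof_ord]
      exact Order.lt_succ_of_le aleph0_le_muInf
    exact not_lt.1 fun hlt => (Order.lt_succ _).not_gt (lt_muInf_of_lt_nu2 hL hcof hlt)

end Polynomial

/-- For an o.p.c. lattice `L`: if `κ` has uncountable cofinality and `κ < νₙ(L)` then
`κ < μ_∞(L)`. In particular `ν_∞(L) ≤ μ_∞(L)⁺`, and `ν_∞(L) ≤ μ_∞(L)` if `μ_∞(L)` has
uncountable cofinality. -/
theorem nu_n_lt_imp_mu_inf (L : Type u) [Lattice L] (h : OPC L) :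
    (∀ n : ℕ, 1 ≤ n → ∀ κ : Cardinal.{u}, ℵ₀ < κ.ord.cof →
      κ < nu2 (Fin n → L) L → κ < muInf L) ∧
    nuInf L ≤ Order.succ (muInf L) ∧
    (ℵ₀ < (muInf L).ord.cof → nuInf L ≤ muInf L) := by
  refine ⟨fun n hn κ => lt_muInf_of_lt_nu2 (h n hn), ?_, fun hcof => ?_⟩
  · exact ciSup_le' fun n => nu2_le_succ_muInf (h (n + 1) n.succ_pos)
  · refine ciSup_le' fun n => not_lt.1 fun hlt => ?_
    exact (lt_muInf_of_lt_nu2 (h (n + 1) n.succ_pos) hcof hlt).false
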